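/- Let φ : F → G be a morphism of deformation functors over Art_K, let (V, v_e) be an obstruction theory for F and (W, w_e) an obstruction theory for G, and let φ' : V → W be a K-linear map compatible with φ, i.e. for every small extension e : 0 → J → B → A → 0 and every a ∈ F(A) one has w_e(φ_A(a)) = (φ' ⊗ id_J)(v_e(a)). If (V, v_e) is complete, φ' : V → W is injective, and the tangent map t_φ : F(K[ε]) → G(K[ε]) is surjective, then φ is smooth. -/

import Mathlib

open CategoryTheory

universe u

/-- The category `Art_K` of commutative local Artinian `K`-algebras with residue field `K`. -/
structure ArtinAlg (K : Type u) [Field K] : Type (u + 1) where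
  carrier : Type u
  [commRing : CommRing carrier]
  [algebra : Algebra K carrier]
  [artinian : IsArtinianRing carrier]
  [localRing : IsLocalRing carrier]
  residue_bij : Function.Bijective
    ((IsLocalRing.residue carrier).comp (algebraMap K carrier))

attribute [instance] ArtinAlg.commRing ArtinAlg.algebra ArtinAlg.artinian ArtinAlg.localRing

instance (K : Type u) [Field K] : CoeSort (ArtinAlg K) (Type u) :=
  ⟨ArtinAlg.carrier⟩

instance (K : Type u) [Field K] : Category (ArtinAlg K) where
  Hom A B := A.carrier →ₐ[K] B.carrier
  id A := AlgHom.id K A.carrier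
  comp f g := g.comp f

/-- Morphisms in `Art_K` are `K`-algebra homomorphisms. -/
def ArtinAlg.Hom.toAlgHom {K : Type u} [Field K] {A B : ArtinAlg K} (f : A ⟶ B) :
    A.carrier →ₐ[K] B.carrier := f

instance {K : Type u} [Field K] {A B : ArtinAlg K} : FunLike (A ⟶ B) A B :=
  inferInstanceAs (FunLike (A.carrier →ₐ[K] B.carrier) A B)

instance {K : Type u} [Field K] {A B : ArtinAlg K} : AlgHomClass (A ⟶ B) K A B :=
  inferInstanceAs (AlgHomClass (A.carrier →ₐ[K] B.carrier) K A B)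

/-- The field `K` itself, as the (terminal/initial) object of `Art_K`. -/
def ArtinAlg.self (K : Type u) [Field K] : ArtinAlg K where
  carrier := K
  residue_bij := by
    constructor
    · exact RingHom.injective _
    · intro y
      obtain ⟨x, hx⟩ := Ideal.Quotient.mk_surjective (I := IsLocalRing.maximalIdeal K) y
      exact ⟨x, hx⟩

/-- A functor of Artin rings: a covariant functor `F : Art_K ⥤ Set` with `F(K)` a one-point
set. -/
def IsFunctorOfArtinRings {K : Type u} [Field K] (F : ArtinAlg K ⥤ Type u) : Prop :=
  Nonempty (F.obj (ArtinAlg.self K)) ∧ Subsingleton (F.obj (ArtinAlg.self K))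

/-- Smoothness of a functor of Artin rings: `F(B) → F(A)` is surjective for every surjection
`B → A` in `Art_K`. -/
def IsSmoothFunctor {K : Type u} [Field K] (F : ArtinAlg K ⥤ Type u) : Prop :=
  ∀ (B A : ArtinAlg K) (f : B ⟶ A), Function.Surjective f → Function.Surjective (F.map f)

/-- Smoothness of a morphism of functors of Artin rings: for every surjection `B → A` in
`Art_K` the induced map `F(B) → G(B) ×_{G(A)} F(A)` is surjective. -/
def IsSmoothMorphism {K : Type u} [Field K] {F G : ArtinAlg K ⥤ Type u} (φ : F ⟶ G) : Prop :=
  ∀ (B A : ArtinAlg K) (f : B ⟶ A), Function.Surjective f →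
    ∀ (gb : G.obj B) (fa : F.obj A), G.map f gb = φ.app A fa →
      ∃ fb : F.obj B, φ.app B fb = gb ∧ F.map f fb = fa
/-- A small extension `e : 0 → J → B → A → 0` in `Art_K`: a surjection `π : B → A` whose
kernel `J` is annihilated by the maximal ideal `m_B`. -/
structure SmallExtension (K : Type u) [Field K] where
  B : ArtinAlg K
  A : ArtinAlg K
  π : B ⟶ A
  surj : Function.Surjective π
  small : ∀ x : B, π x = 0 → ∀ y ∈ IsLocalRing.maximalIdeal B.carrier, y * x = 0

/-- The kernel `J` of a small extension, as a `K`-vector space. -/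
def SmallExtension.J {K : Type u} [Field K] (e : SmallExtension K) :
    Submodule K e.B.carrier :=
  Submodule.restrictScalars K (RingHom.ker (ArtinAlg.Hom.toAlgHom e.π).toRingHom)

/-- The map induced on the kernels by a morphism of small extensions. -/
def SmallExtension.kerMap {K : Type u} [Field K] {e₁ e₂ : SmallExtension K}
    (αB : e₁.B ⟶ e₂.B) (αA : e₁.A ⟶ e₂.A) (hc : αB ≫ e₂.π = e₁.π ≫ αA) :
    e₁.J →ₗ[K] e₂.J where
  toFun x := ⟨αB x.1, by
    have hx : e₁.π x.1 = 0 := by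
      have hx0 := x.2
      simp only [SmallExtension.J, Submodule.restrictScalars_mem, RingHom.mem_ker] at hx0
      exact hx0
    have h' : e₂.π (αB x.1) = αA (e₁.π x.1) := DFunLike.congr_fun hc x.1
    simp only [SmallExtension.J, Submodule.restrictScalars_mem, RingHom.mem_ker]
    show e₂.π (αB x.1) = 0
    rw [h', hx, map_zero]⟩
  map_add' x y := by
    ext
    exact map_add (ArtinAlg.Hom.toAlgHom αB) x.1 y.1
  map_smul' c x := by
    ext
    exact map_smul (ArtinAlg.Hom.toAlgHom αB).toLinearMap c x.1

/-- An obstruction theory `(V, v_e)` for a functor of Artin rings `F`. -/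
structure ObstructionTheory {K : Type u} [Field K] (F : ArtinAlg K ⥤ Type u) :
    Type (u + 1) where
  V : Type u
  [addCommGroup : AddCommGroup V]
  [module : Module K V]
  ob : ∀ e : SmallExtension K, F.obj e.A → TensorProduct K V e.J
  ob_eq_zero_of_lifts : ∀ (e : SmallExtension K) (a : F.obj e.A),
    (∃ b : F.obj e.B, F.map e.π b = a) → ob e a = 0
  base_change : ∀ (e₁ e₂ : SmallExtension K) (αB : e₁.B ⟶ e₂.B) (αA : e₁.A ⟶ e₂.A)
    (hc : αB ≫ e₂.π = e₁.π ≫ αA) (a : F.obj e₁.A),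
    ob e₂ (F.map αA a) = LinearMap.lTensor V (SmallExtension.kerMap αB αA hc) (ob e₁ a)

attribute [instance] ObstructionTheory.addCommGroup ObstructionTheory.module

/-- Completeness of an obstruction theory: an element lifts iff its obstruction vanishes. -/
def ObstructionTheory.Complete {K : Type u} [Field K] {F : ArtinAlg K ⥤ Type u}
    (OT : ObstructionTheory F) : Prop :=
  ∀ (e : SmallExtension K) (a : F.obj e.A), OT.ob e a = 0 → ∃ b : F.obj e.B, F.map e.π b = a
/-- `(D, p, q)` realizes the fiber product `B ×_A C` in `Art_K` (stated concretely on
underlying algebras). -/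
structure IsFiberProductCone {K : Type u} [Field K] {A B C D : ArtinAlg K}
    (f : B ⟶ A) (g : C ⟶ A) (p : D ⟶ B) (q : D ⟶ C) : Prop where
  comm : ∀ d : D, f (p d) = g (q d)
  inj : ∀ d₁ d₂ : D, p d₁ = p d₂ → q d₁ = q d₂ → d₁ = d₂
  surj : ∀ (b : B) (c : C), f b = g c → ∃ d : D, p d = b ∧ q d = c

/-- A deformation functor: a functor of Artin rings such that the natural map
`η : F(B ×_A C) → F(B) ×_{F(A)} F(C)` is surjective whenever `B → A` is surjective, and
bijective whenever `A = K`. -/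
structure IsDeformationFunctor {K : Type u} [Field K] (F : ArtinAlg K ⥤ Type u) : Prop where
  nonempty_pt : Nonempty (F.obj (ArtinAlg.self K))
  subsingleton_pt : Subsingleton (F.obj (ArtinAlg.self K))
  eta_surjective : ∀ {A B C D : ArtinAlg K} (f : B ⟶ A) (g : C ⟶ A) (p : D ⟶ B) (q : D ⟶ C),
    IsFiberProductCone f g p q → Function.Surjective f →
    ∀ (x : F.obj B) (y : F.obj C), F.map f x = F.map g y →
      ∃ d : F.obj D, F.map p d = x ∧ F.map q d = y
  eta_bijective : ∀ {B C D : ArtinAlg K} (f : B ⟶ ArtinAlg.self K)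
    (g : C ⟶ ArtinAlg.self K) (p : D ⟶ B) (q : D ⟶ C),
    IsFiberProductCone f g p q →
    ∀ (x : F.obj B) (y : F.obj C), F.map f x = F.map g y →
      ∃! d : F.obj D, F.map p d = x ∧ F.map q d = y
open TrivSqZeroExt in
/-- A trivial square-zero extension `K ⊕ M` of a field `K` by a finite-dimensional vector
space `M`, as an object of `Art_K`. -/
noncomputable def ArtinAlg.tszeObj (K : Type u) [Field K] (M : Type u) [AddCommGroup M]
    [Module K M] [Module Kᵐᵒᵖ M] [IsCentralScalar K M] [Module.Finite K M] :
    ArtinAlg K :=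
  letI instArt : IsArtinianRing (TrivSqZeroExt K M) := by
    have : Module.Finite K (TrivSqZeroExt K M) :=
      inferInstanceAs (Module.Finite K (K × M))
    exact IsArtinianRing.of_finite K (TrivSqZeroExt K M)
  letI instLoc : IsLocalRing (TrivSqZeroExt K M) := by
    refine IsLocalRing.of_isUnit_or_isUnit_one_sub_self fun a => ?_
    rcases eq_or_ne a.fst 0 with h | h
    · right
      rw [isUnit_iff_isUnit_fst]
      simp [h]
    · left
      rw [isUnit_iff_isUnit_fst]
      exact h.isUnit
  { carrier := TrivSqZeroExt K M
    residue_bij := by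
      constructor
      · exact RingHom.injective _
      · intro y
        obtain ⟨x, hx⟩ := Ideal.Quotient.mk_surjective
          (I := IsLocalRing.maximalIdeal (TrivSqZeroExt K M)) y
        refine ⟨x.fst, ?_⟩
        have hmem : (inr x.snd : TrivSqZeroExt K M) ∈
            IsLocalRing.maximalIdeal (TrivSqZeroExt K M) := by
          rw [IsLocalRing.mem_maximalIdeal, mem_nonunits_iff, isUnit_iff_isUnit_fst, fst_inr]
          exact not_isUnit_zero
        have h0 : (IsLocalRing.residue (TrivSqZeroExt K M)) (inr x.snd) = 0 :=
          Ideal.Quotient.eq_zero_iff_mem.2 hmem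
        have hxeq : (algebraMap K (TrivSqZeroExt K M)) x.fst = x - inr x.snd := by
          rw [TrivSqZeroExt.algebraMap_eq_inl]
          exact eq_sub_of_add_eq (inl_fst_add_inr_snd_eq x)
        show (IsLocalRing.residue (TrivSqZeroExt K M)) ((algebraMap K _) x.fst) = y
        rw [hxeq, map_sub, h0, sub_zero]
        exact hx }
/-- The ring of dual numbers `K[ε]` as an object of `Art_K`. -/
noncomputable def ArtinAlg.eps (K : Type u) [Field K] : ArtinAlg K :=
  ArtinAlg.tszeObj K K

/-- The ring `K[ε₁, ε₂]/(ε₁, ε₂)²`, i.e. the fiber product `K[ε] ×_K K[ε]`, as an object of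
`Art_K`. -/
noncomputable def ArtinAlg.epsSq (K : Type u) [Field K] : ArtinAlg K :=
  ArtinAlg.tszeObj K (K × K)

/-- The first projection `K[ε₁, ε₂]/(ε₁, ε₂)² → K[ε]`, `ε₁ ↦ ε, ε₂ ↦ 0`. -/
noncomputable def ArtinAlg.pr1 (K : Type u) [Field K] : ArtinAlg.epsSq K ⟶ ArtinAlg.eps K :=
  TrivSqZeroExt.map (LinearMap.fst K K K)

/-- The second projection `K[ε₁, ε₂]/(ε₁, ε₂)² → K[ε]`, `ε₁ ↦ 0, ε₂ ↦ ε`. -/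
noncomputable def ArtinAlg.pr2 (K : Type u) [Field K] : ArtinAlg.epsSq K ⟶ ArtinAlg.eps K :=
  TrivSqZeroExt.map (LinearMap.snd K K K)

/-- The addition map `K[ε₁, ε₂]/(ε₁, ε₂)² → K[ε]` sending both `ε₁` and `ε₂` to `ε`. -/
noncomputable def ArtinAlg.addMap (K : Type u) [Field K] :
    ArtinAlg.epsSq K ⟶ ArtinAlg.eps K :=
  TrivSqZeroExt.map (LinearMap.fst K K K + LinearMap.snd K K K)

/-- The scaling map `K[ε] → K[ε]`, `ε ↦ a • ε`. -/
noncomputable def ArtinAlg.scaleMap (K : Type u) [Field K] (a : K) :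
    ArtinAlg.eps K ⟶ ArtinAlg.eps K :=
  TrivSqZeroExt.map (a • LinearMap.id)

/-- The unit map `K → K[ε]`. -/
noncomputable def ArtinAlg.unitMap (K : Type u) [Field K] :
    ArtinAlg.self K ⟶ ArtinAlg.eps K :=
  Algebra.ofId K (DualNumber K)

/-- The projection `K[ε] → K`, `ε ↦ 0`. -/
noncomputable def ArtinAlg.projMap (K : Type u) [Field K] :
    ArtinAlg.eps K ⟶ ArtinAlg.self K :=
  TrivSqZeroExt.fstHom K K K

/-!
Every surjection in `Art_K` is a composite of small extensions whose kernel is a line, and lifting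
along a composite can be done one step at a time, so it suffices to treat one such extension
`B → A`. Let `gb ∈ G(B)` and `fa ∈ F(A)` agree in `G(A)`. The obstruction of `fa` becomes zero in
`W`, hence is zero, and `fa` lifts to some `fb' ∈ F(B)`, although `φ(fb')` may differ from `gb`.
The kernel being a line, `B ×_A B ≅ B ×_K K[ε]`, so the elements of `G(B)` over a given element of
`G(A)` differ from one another by tangent vectors in `G(K[ε])`; a tangent vector taking `φ(fb')`
to `gb` comes from `F(K[ε])`, and acting with it on `fb'` gives the required lift.
-/

theorem smul_eq_zero_of_isSimpleModule_of_mem_maximalIdeal {R M : Type*} [CommRing R]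
    [IsLocalRing R] [AddCommGroup M] [Module R M] [IsSimpleModule R M] {y : R}
    (hy : y ∈ IsLocalRing.maximalIdeal R) (x : M) : y • x = 0 := by
  rw [← IsLocalRing.eq_maximalIdeal (IsSimpleModule.annihilator_isMaximal (M := M))] at hy
  exact Module.mem_annihilator.1 hy x

namespace ArtinAlg

variable {K : Type u} [Field K]

/-- The augmentation `A → A / m_A = K`. -/
noncomputable def augmentation (A : ArtinAlg K) : A.carrier →ₐ[K] K :=
  ((AlgEquiv.ofBijective (Algebra.ofId K (IsLocalRing.ResidueField A.carrier))
    A.residue_bij).symm : IsLocalRing.ResidueField A.carrier →ₐ[K] K).comp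
    (IsScalarTower.toAlgHom K A.carrier (IsLocalRing.ResidueField A.carrier))

theorem augmentation_eq_zero_iff (A : ArtinAlg K) (a : A) :
    A.augmentation a = 0 ↔ a ∈ IsLocalRing.maximalIdeal A.carrier := by
  rw [← IsLocalRing.residue_eq_zero_iff]
  exact EmbeddingLike.map_eq_zero_iff (f := (AlgEquiv.ofBijective
    (Algebra.ofId K (IsLocalRing.ResidueField A.carrier)) A.residue_bij).symm)

theorem sub_algebraMap_augmentation_mem_maximalIdeal (A : ArtinAlg K) (a : A) :
    a - algebraMap K A.carrier (A.augmentation a) ∈ IsLocalRing.maximalIdeal A.carrier := by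
  rw [← augmentation_eq_zero_iff, map_sub, AlgHom.commutes, Algebra.algebraMap_self_apply,
    sub_self]

section Module

variable (A : ArtinAlg K) {M : Type*} [AddCommGroup M] [Module A.carrier M] [Module K M]
  [IsScalarTower K A.carrier M]

theorem smul_eq_augmentation_smul {x : M}
    (hx : ∀ y ∈ IsLocalRing.maximalIdeal A.carrier, y • x = 0) (a : A) :
    a • x = A.augmentation a • x := by
  have h := hx _ (A.sub_algebraMap_augmentation_mem_maximalIdeal a)
  rwa [sub_smul, algebraMap_smul, sub_eq_zero] at h

theorem finrank_eq_one_of_isSimpleModule [IsSimpleModule A.carrier M] :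
    Module.finrank K M = 1 := by
  have := IsSimpleModule.nontrivial A.carrier M
  obtain ⟨v, hv⟩ := exists_ne (0 : M)
  refine (finrank_eq_one_iff_of_nonzero' v hv).2 fun x => ?_
  obtain ⟨a, rfl⟩ := IsSimpleModule.toSpanSingleton_surjective A.carrier hv x
  have hmv (y : A) (hy : y ∈ IsLocalRing.maximalIdeal A.carrier) : y • v = 0 :=
    smul_eq_zero_of_isSimpleModule_of_mem_maximalIdeal hy v
  exact ⟨A.augmentation a, (A.smul_eq_augmentation_smul hmv a).symm⟩

end Module

/-- A local Artinian `K`-algebra in which every element is congruent to a scalar modulo the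
maximal ideal, as an object of `Art_K`. -/
def ofExistsSubMem (R : Type u) [CommRing R] [Algebra K R] [IsArtinianRing R] [IsLocalRing R]
    (h : ∀ r : R, ∃ c : K, r - algebraMap K R c ∈ IsLocalRing.maximalIdeal R) : ArtinAlg K where
  carrier := R
  residue_bij := by
    refine ⟨RingHom.injective _, fun y => ?_⟩
    obtain ⟨r, rfl⟩ := IsLocalRing.residue_surjective y
    obtain ⟨c, hc⟩ := h r
    rw [← IsLocalRing.residue_eq_zero_iff, map_sub, sub_eq_zero] at hc
    exact ⟨c, hc.symm⟩

/-- The quotient of an object of `Art_K` by a proper ideal. -/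
def quotient (A : ArtinAlg K) (I : Ideal A.carrier) (hI : I ≠ ⊤) : ArtinAlg K :=
  haveI : Nontrivial (A.carrier ⧸ I) := Ideal.Quotient.nontrivial_iff.2 hI
  haveI : IsLocalRing (A.carrier ⧸ I) :=
    .of_surjective' (Ideal.Quotient.mk I) Ideal.Quotient.mk_surjective
  haveI : IsLocalHom (Ideal.Quotient.mk I) :=
    .of_surjective _ Ideal.Quotient.mk_surjective
  ofExistsSubMem (A.carrier ⧸ I) fun r => by
    obtain ⟨a, rfl⟩ := Ideal.Quotient.mk_surjective r
    exact ⟨A.augmentation a, map_nonunit (Ideal.Quotient.mk I) _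
      (A.sub_algebraMap_augmentation_mem_maximalIdeal a)⟩

/-- The trivial square-zero extension `A ⊕ M` of `A` by a finite module `M`, as an object of
`Art_K`; for `A = K` this is `ArtinAlg.tszeObj`. -/
noncomputable def trivSqZeroExt (A : ArtinAlg K) (M : Type u) [AddCommGroup M]
    [Module K M] [Module A.carrier M] [Module A.carrierᵐᵒᵖ M] [IsCentralScalar A.carrier M]
    [IsScalarTower K A.carrier M] [IsScalarTower K A.carrierᵐᵒᵖ M] [Module.Finite A.carrier M] :
    ArtinAlg K :=
  haveI : Module.Finite A.carrier (TrivSqZeroExt A.carrier M) :=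
    inferInstanceAs (Module.Finite A.carrier (A.carrier × M))
  haveI : IsArtinianRing (TrivSqZeroExt A.carrier M) :=
    IsArtinianRing.of_finite A.carrier _
  haveI : IsLocalRing (TrivSqZeroExt A.carrier M) :=
    .of_isUnit_or_isUnit_one_sub_self fun r => by
      simpa only [TrivSqZeroExt.isUnit_iff_isUnit_fst, TrivSqZeroExt.fst_sub,
        TrivSqZeroExt.fst_one] using IsLocalRing.isUnit_or_isUnit_one_sub_self r.fst
  ofExistsSubMem (TrivSqZeroExt A.carrier M) fun r => ⟨A.augmentation r.fst, by
    rw [IsLocalRing.mem_maximalIdeal, mem_nonunits_iff, TrivSqZeroExt.isUnit_iff_isUnit_fst]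
    exact A.sub_algebraMap_augmentation_mem_maximalIdeal r.fst⟩

theorem isIso_of_bijective {A B : ArtinAlg K} (f : A ⟶ B) (hf : Function.Bijective f) :
    IsIso f :=
  let E := AlgEquiv.ofBijective (Hom.toAlgHom f) hf
  ⟨(E.symm : B.carrier →ₐ[K] A.carrier), DFunLike.ext _ _ E.symm_apply_apply,
    DFunLike.ext _ _ E.apply_symm_apply⟩

end ArtinAlg

namespace SmallExtension

variable {K : Type u} [Field K]

/-- A surjection in `Art_K` whose kernel is a minimal nonzero ideal, as a small extension. -/
def ofIsAtom {B A : ArtinAlg K} (π : B ⟶ A) (hπ : Function.Surjective π)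
    (hker : IsAtom (RingHom.ker π)) : SmallExtension K where
  B := B
  A := A
  π := π
  surj := hπ
  small x hx _ hy :=
    haveI := isSimpleModule_iff_isAtom.2 hker
    congrArg Subtype.val (smul_eq_zero_of_isSimpleModule_of_mem_maximalIdeal hy
      (⟨x, hx⟩ : RingHom.ker π))

theorem finrank_J_ofIsAtom {B A : ArtinAlg K} (π : B ⟶ A) (hπ : Function.Surjective π)
    (hker : IsAtom (RingHom.ker π)) : Module.finrank K (ofIsAtom π hπ hker).J = 1 :=
  haveI := isSimpleModule_iff_isAtom.2 hker
  B.finrank_eq_one_of_isSimpleModule (M := RingHom.ker π)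

variable (e : SmallExtension K)

/-- The kernel `J` of a small extension, as an ideal of `B`. -/
def kerIdeal : Ideal e.B.carrier := RingHom.ker e.π

variable {e}

theorem π_kerIdeal (x : e.kerIdeal) : e.π x = 0 := x.2

theorem kerIdeal_le_maximalIdeal : e.kerIdeal ≤ IsLocalRing.maximalIdeal e.B.carrier :=
  IsLocalRing.le_maximalIdeal (RingHom.ker_ne_top e.π)

theorem smul_kerIdeal_eq_augmentation_smul (b : e.B) (x : e.kerIdeal) :
    b • x = e.B.augmentation b • x :=
  e.B.smul_eq_augmentation_smul (fun y hy => Subtype.ext (e.small x (π_kerIdeal x) y hy)) b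

theorem map_smul_kerIdeal (c : e.kerIdeal →ₗ[K] K) (b : e.B) (x : e.kerIdeal) :
    c (b • x) = e.B.augmentation b • c x := by
  rw [smul_kerIdeal_eq_augmentation_smul, map_smul]

variable (e)

/-- The kernel pair `B ×_A B` of a small extension, realized as the trivial square-zero extension
`B ⊕ J`, with `(b, x)` standing for the pair `(b, b + x)`. -/
noncomputable def kernelPair : ArtinAlg K := e.B.trivSqZeroExt e.kerIdeal

/-- The first projection `B ×_A B → B`, that is `(b, x) ↦ b`. -/
noncomputable def kernelPairFst : e.kernelPair ⟶ e.B :=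
  TrivSqZeroExt.fstHom K e.B.carrier e.kerIdeal

/-- The second projection `B ×_A B → B`, that is `(b, x) ↦ b + x`. -/
noncomputable def kernelPairSnd : e.kernelPair ⟶ e.B :=
  TrivSqZeroExt.lift (AlgHom.id K e.B.carrier) (e.kerIdeal.subtype.restrictScalars K)
    (fun x y => e.small y (π_kerIdeal y) x (kerIdeal_le_maximalIdeal x.2))
    (fun _ _ => rfl) (fun _ _ => rfl)

/-- The map `B ⊕ J → K[ε]`, `(b, x) ↦ b₀ + c(x) ε`, where `b₀` is the residue of `b` and `c` is a
linear form on `J`. -/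
noncomputable def kernelPairToEps (c : e.kerIdeal →ₗ[K] K) : e.kernelPair ⟶ ArtinAlg.eps K :=
  TrivSqZeroExt.lift (A := TrivSqZeroExt K K)
    ((TrivSqZeroExt.inlAlgHom K K K).comp e.B.augmentation) ((TrivSqZeroExt.inrHom K K).comp c)
    (fun _ _ => TrivSqZeroExt.inr_mul_inr _ _ _)
    (fun b x => by
      change TrivSqZeroExt.inr (c (b • x)) =
        TrivSqZeroExt.inl (e.B.augmentation b) * TrivSqZeroExt.inr (c x)
      rw [TrivSqZeroExt.inl_mul_inr, map_smul_kerIdeal])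
    (fun b x => by
      rw [op_smul_eq_smul]
      change TrivSqZeroExt.inr (c (b • x)) =
        TrivSqZeroExt.inr (c x) * TrivSqZeroExt.inl (e.B.augmentation b)
      rw [TrivSqZeroExt.inr_mul_inl, op_smul_eq_smul, map_smul_kerIdeal])

theorem isFiberProductCone_kernelPair :
    IsFiberProductCone e.π e.π e.kernelPairFst e.kernelPairSnd := by
  have hsnd (d : e.kernelPair) : e.kernelPairSnd d =
      TrivSqZeroExt.fst d + (TrivSqZeroExt.snd d : e.kerIdeal) := rfl
  refine ⟨fun d => ?_, fun d₁ d₂ h₁ h₂ => ?_, fun b b' h => ?_⟩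
  · rw [hsnd, map_add, π_kerIdeal, add_zero]
    rfl
  · have hfst : TrivSqZeroExt.fst d₁ = TrivSqZeroExt.fst d₂ := h₁
    rw [hsnd, hsnd, hfst] at h₂
    exact TrivSqZeroExt.ext hfst (Subtype.ext (add_left_cancel h₂))
  · have hmem : b' - b ∈ e.kerIdeal := by
      rw [kerIdeal, RingHom.mem_ker, map_sub, h, sub_self]
    exact ⟨(b, ⟨b' - b, hmem⟩), rfl, add_sub_cancel b b'⟩

theorem isFiberProductCone_kernelPairToEps (c : e.kerIdeal ≃ₗ[K] K) :
    IsFiberProductCone (A := ArtinAlg.self K) e.B.augmentation (ArtinAlg.projMap K)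
      e.kernelPairFst (e.kernelPairToEps c) := by
  have hfst (d : TrivSqZeroExt e.B.carrier e.kerIdeal) :
      TrivSqZeroExt.fst (e.kernelPairToEps c d) = e.B.augmentation d.fst :=
    add_zero (e.B.augmentation d.fst)
  have hsnd (d : TrivSqZeroExt e.B.carrier e.kerIdeal) :
      TrivSqZeroExt.snd (e.kernelPairToEps c d) = c d.snd :=
    zero_add (c d.snd)
  refine ⟨fun d => (hfst d).symm, fun d₁ d₂ h₁ h₂ => ?_, fun b t h => ?_⟩
  · exact TrivSqZeroExt.ext h₁ (c.injective
      ((hsnd d₁).symm.trans ((congrArg TrivSqZeroExt.snd h₂).trans (hsnd d₂))))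
  · exact ⟨(b, c.symm (TrivSqZeroExt.snd t)), rfl,
      TrivSqZeroExt.ext ((hfst _).trans h) ((hsnd _).trans (c.apply_symm_apply _))⟩

end SmallExtension

namespace ArtinAlg

variable {K : Type u} [Field K]

/-- Every surjection in `Art_K` is a composite of isomorphisms and of small extensions with
one-dimensional kernel. -/
theorem morphismProperty_of_surjective (P : MorphismProperty (ArtinAlg K))
    [P.IsStableUnderComposition] (hiso : MorphismProperty.isomorphisms _ ≤ P)
    (hsmall : ∀ e : SmallExtension K, Module.finrank K e.J = 1 → P e.π)
    {B A : ArtinAlg K} (f : B ⟶ A) (hf : Function.Surjective f) : P f := by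
  induction hI : RingHom.ker f using WellFoundedLT.induction generalizing A with
  | ind I ih =>
  subst hI
  rcases eq_or_ne (RingHom.ker f) ⊥ with hbot | hbot
  · exact hiso f (isIso_of_bijective f ⟨(RingHom.injective_iff_ker_eq_bot _).2 hbot, hf⟩)
  obtain ⟨I', -, hcov⟩ := exists_le_covBy_of_lt (bot_lt_iff_ne_bot.2 hbot)
  let f' : B ⟶ B.quotient I' hcov.lt.ne_top := Ideal.Quotient.mkₐ K I'
  let g : B.quotient I' hcov.lt.ne_top ⟶ A :=
    Ideal.Quotient.liftₐ I' (Hom.toAlgHom f) fun x hx => hcov.le hx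
  have hf' : Function.Surjective f' := Ideal.Quotient.mk_surjective
  have hg : Function.Surjective g := fun a => (hf a).imp' f' fun b hb => hb
  have hkerf' : RingHom.ker f' = I' := Ideal.mk_ker
  have hatom : IsAtom (RingHom.ker g) := by
    refine bot_covBy_iff.1 (CovBy.of_image (Ideal.orderEmbeddingOfSurjective f' hf') ?_)
    change RingHom.ker f' ⋖ RingHom.ker f
    rwa [hkerf']
  exact P.comp_mem f' g (ih I' hcov.lt f' hf' hkerf')
    (hsmall (.ofIsAtom g hg hatom) (SmallExtension.finrank_J_ofIsAtom g hg hatom))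

end ArtinAlg

section Functors

variable {K : Type u} [Field K] {F G : ArtinAlg K ⥤ Type u}

/-- `F(B ×_K C) → F(B) × F(C)` is surjective for all `B` and `C` in `Art_K`. -/
def IsSurjectiveOnProducts (F : ArtinAlg K ⥤ Type u) : Prop :=
  ∀ {B C D : ArtinAlg K} (f : B ⟶ ArtinAlg.self K) (g : C ⟶ ArtinAlg.self K) (p : D ⟶ B)
    (q : D ⟶ C), IsFiberProductCone f g p q →
    ∀ (x : F.obj B) (y : F.obj C), ∃ d : F.obj D, F.map p d = x ∧ F.map q d = y

namespace IsDeformationFunctor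

theorem isSurjectiveOnProducts (hF : IsDeformationFunctor F) : IsSurjectiveOnProducts F :=
  fun f g p q hD x y => (hF.eta_bijective f g p q hD x y (hF.subsingleton_pt.elim _ _)).exists

theorem ext_of_product (hF : IsDeformationFunctor F) {B C D : ArtinAlg K}
    {f : B ⟶ ArtinAlg.self K} {g : C ⟶ ArtinAlg.self K} {p : D ⟶ B} {q : D ⟶ C}
    (hD : IsFiberProductCone f g p q) {d₁ d₂ : F.obj D} (hp : F.map p d₁ = F.map p d₂)
    (hq : F.map q d₁ = F.map q d₂) : d₁ = d₂ :=
  (hF.eta_bijective f g p q hD _ _ (hF.subsingleton_pt.elim _ _)).unique ⟨hp, hq⟩ ⟨rfl, rfl⟩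

end IsDeformationFunctor

/-- Lifting along `f : B → A` for `φ : F → G`: surjectivity of `F(B) → G(B) ×_{G(A)} F(A)`. Thus
`φ` is smooth if every surjection has this property. -/
def smoothAlong (φ : F ⟶ G) : MorphismProperty (ArtinAlg K) := fun B A f =>
  ∀ (gb : G.obj B) (fa : F.obj A), G.map f gb = φ.app A fa →
    ∃ fb : F.obj B, φ.app B fb = gb ∧ F.map f fb = fa

instance (φ : F ⟶ G) : (smoothAlong φ).IsStableUnderComposition where
  comp_mem f g hf hg gb fa h := by
    rw [Functor.map_comp_apply] at h
    obtain ⟨fa', hfa', rfl⟩ := hg _ fa h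
    obtain ⟨fb, hfb, rfl⟩ := hf gb fa' hfa'.symm
    exact ⟨fb, hfb, Functor.map_comp_apply F f g fb⟩

theorem isomorphisms_le_smoothAlong (φ : F ⟶ G) :
    MorphismProperty.isomorphisms _ ≤ smoothAlong φ := by
  intro B A f (_ : IsIso f) gb fa h
  refine ⟨F.map (inv f) fa, ?_, ?_⟩
  · rw [NatTrans.naturality_apply, ← h, ← Functor.map_comp_apply, IsIso.hom_inv_id,
      Functor.map_id_apply]
  · rw [← Functor.map_comp_apply, IsIso.inv_hom_id, Functor.map_id_apply]

theorem ObstructionTheory.Complete.exists_lift_of_map_lifts {φ : F ⟶ G}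
    {OTF : ObstructionTheory F} (hcomplete : OTF.Complete) (OTG : ObstructionTheory G)
    {φ' : OTF.V →ₗ[K] OTG.V} (hinj : Function.Injective φ') {e : SmallExtension K}
    {gb : G.obj e.B} {fa : F.obj e.A}
    (hcompat : OTG.ob e (φ.app e.A fa) = LinearMap.rTensor (↥e.J) φ' (OTF.ob e fa))
    (h : G.map e.π gb = φ.app e.A fa) : ∃ fb : F.obj e.B, F.map e.π fb = fa := by
  refine hcomplete e fa (Module.Flat.rTensor_preserves_injective_linearMap φ' hinj ?_)
  rw [← hcompat, map_zero]
  exact OTG.ob_eq_zero_of_lifts e _ ⟨gb, h⟩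

/-- When `B ×_A B ≅ B ×_K T`, elements of `G(B)` with the same image in `G(A)` differ by an element
of `G(T)`, which comes from `F(T)`. -/
theorem exists_app_eq_of_kernelPair (hF : IsSurjectiveOnProducts F) (hG : IsDeformationFunctor G)
    (φ : F ⟶ G) {A B D T : ArtinAlg K} {π : B ⟶ A} {p r : D ⟶ B} {q : D ⟶ T}
    {f : B ⟶ ArtinAlg.self K} {g : T ⟶ ArtinAlg.self K} (hπ : Function.Surjective π)
    (hpr : IsFiberProductCone π π p r) (hpq : IsFiberProductCone f g p q)
    (hT : Function.Surjective (φ.app T)) {gb : G.obj B} {fb' : F.obj B}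
    (h : G.map π (φ.app B fb') = G.map π gb) :
    ∃ fb : F.obj B, φ.app B fb = gb ∧ F.map π fb = F.map π fb' := by
  obtain ⟨gd, hpgd, hrgd⟩ := hG.eta_surjective π π p r hpr hπ _ _ h
  obtain ⟨ft, hft⟩ := hT (G.map q gd)
  obtain ⟨fd, hpfd, hqfd⟩ := hF f g p q hpq fb' ft
  have hfd : φ.app D fd = gd := by
    refine hG.ext_of_product hpq ?_ ?_
    · rw [← NatTrans.naturality_apply, hpfd, hpgd]
    · rw [← NatTrans.naturality_apply, hqfd, hft]
  have hcomm : r ≫ π = p ≫ π := DFunLike.ext _ _ fun d => (hpr.comm d).symm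
  refine ⟨F.map r fd, ?_, ?_⟩
  · rw [NatTrans.naturality_apply, hfd, hrgd]
  · rw [← hpfd, ← Functor.map_comp_apply, ← Functor.map_comp_apply, hcomm]

theorem exists_app_eq_of_tangent_surjective (hF : IsSurjectiveOnProducts F)
    (hG : IsDeformationFunctor G) (φ : F ⟶ G)
    (hsurj : Function.Surjective (φ.app (ArtinAlg.eps K))) {e : SmallExtension K}
    (he : Module.finrank K e.J = 1) {gb : G.obj e.B} {fb' : F.obj e.B}
    (h : G.map e.π (φ.app e.B fb') = G.map e.π gb) :
    ∃ fb : F.obj e.B, φ.app e.B fb = gb ∧ F.map e.π fb = F.map e.π fb' := by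
  obtain ⟨c⟩ : Nonempty (K ≃ₗ[K] e.kerIdeal) :=
    Module.nonempty_linearEquiv_of_finrank_eq_one he
  exact exists_app_eq_of_kernelPair hF hG φ e.surj e.isFiberProductCone_kernelPair
    (e.isFiberProductCone_kernelPairToEps c.symm) hsurj h

end Functors

theorem isSmoothMorphism_of_complete_injective_of_tangent_surjective_general {K : Type u}
    [Field K] {F G : ArtinAlg K ⥤ Type u} (hF : IsSurjectiveOnProducts F)
    (hG : IsDeformationFunctor G) (φ : F ⟶ G) (OTF : ObstructionTheory F)
    (OTG : ObstructionTheory G) (φ' : OTF.V →ₗ[K] OTG.V)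
    (hcompat : ∀ (e : SmallExtension K) (a : F.obj e.A),
      OTG.ob e (φ.app e.A a) = LinearMap.rTensor (↥e.J) φ' (OTF.ob e a))
    (hcomplete : OTF.Complete) (hinj : Function.Injective φ')
    (hsurj : Function.Surjective (φ.app (ArtinAlg.eps K))) :
    IsSmoothMorphism φ := by
  have hsmall (e : SmallExtension K) (he : Module.finrank K e.J = 1) :
      smoothAlong φ e.π := by
    intro gb fa h
    obtain ⟨fb', rfl⟩ := hcomplete.exists_lift_of_map_lifts OTG hinj (hcompat e fa) h
    rw [NatTrans.naturality_apply] at h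
    exact exists_app_eq_of_tangent_surjective hF hG φ hsurj he h.symm
  intro B A f hf
  exact ArtinAlg.morphismProperty_of_surjective (smoothAlong φ)
    (isomorphisms_le_smoothAlong φ) hsmall f hf

/-- Let `φ : F → G` be a morphism of deformation functors, `(V, v_e)` a
complete obstruction theory for `F`, `(W, w_e)` an obstruction theory for `G`, and
`φ' : V → W` a compatible injective linear map. If the tangent map
`t_φ : F(K[ε]) → G(K[ε])` is surjective then `φ` is smooth. -/
theorem isSmoothMorphism_of_complete_injective_of_tangent_surjective {K : Type u} [Field K]
    {F G : ArtinAlg K ⥤ Type u} (hF : IsDeformationFunctor F) (hG : IsDeformationFunctor G)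
    (φ : F ⟶ G) (OTF : ObstructionTheory F) (OTG : ObstructionTheory G)
    (φ' : OTF.V →ₗ[K] OTG.V)
    (hcompat : ∀ (e : SmallExtension K) (a : F.obj e.A),
      OTG.ob e (φ.app e.A a) = LinearMap.rTensor (↥e.J) φ' (OTF.ob e a))
    (hcomplete : OTF.Complete) (hinj : Function.Injective φ')
    (hsurj : Function.Surjective (φ.app (ArtinAlg.eps K))) :
    IsSmoothMorphism φ :=
  isSmoothMorphism_of_complete_injective_of_tangent_surjective_general
    hF.isSurjectiveOnProducts hG φ OTF OTG φ' hcompat hcomplete hinj hsurj
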